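/- arXiv:1911.05136 — 3 statements merged into one kernel-verified Lean document; each statement's English description precedes it below -/
import Mathlib

section
/- Let A ∈ ℂ^{m×m}, ε ≥ 0, z₀ ∈ ℂ, θ ∈ ℝ, and r ∈ ℝ. Then ε is a singular value of F_A(r,θ) = A − (z₀ + r·e^{iθ})I if and only if i·r is an eigenvalue of the matrix pencil (C, D_θ), i.e., det(C − i·r·D_θ) = 0. -/
open Complex Matrix MeasureTheory Set Polynomial Topology

noncomputable section

open scoped Classical

/-- `s` is a singular value of the square complex matrix `M`:
`s ≥ 0` and `s²` is an eigenvalue of `M Mᴴ`. -/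
def IsSingularValue {k : ℕ} (M : Matrix (Fin k) (Fin k) ℂ) (s : ℝ) : Prop :=
  0 ≤ s ∧ (M * Mᴴ - ((s : ℂ) ^ 2) • 1).det = 0

/-- The smallest singular value of `M`. -/
def sigmaMin {k : ℕ} (M : Matrix (Fin k) (Fin k) ℂ) : ℝ :=
  sInf {s : ℝ | IsSingularValue M s}

/-- The `ε`-pseudospectrum of `M`. -/
def pspec {k : ℕ} (ε : ℝ) (M : Matrix (Fin k) (Fin k) ℂ) : Set ℂ :=
  {z : ℂ | sigmaMin (M - z • 1) ≤ ε}

/-- The ray emanating from `z₀` in direction `θ`. -/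
def ray (z₀ : ℂ) (θ : ℝ) : Set ℂ :=
  {z : ℂ | ∃ r : ℝ, 0 < r ∧ z = z₀ + (r : ℂ) * Complex.exp ((θ : ℂ) * Complex.I)}

/-- The matrix `C` of the pencil `(C, D_θ)` associated with `A`, `ε`, `z₀`. -/
def pencilC {m : ℕ} (A : Matrix (Fin m) (Fin m) ℂ) (ε : ℝ) (z₀ : ℂ) :
    Matrix (Fin m ⊕ Fin m) (Fin m ⊕ Fin m) ℂ :=
  Matrix.fromBlocks (A - z₀ • 1) ((-(ε : ℂ)) • 1) ((ε : ℂ) • 1) (-(A - z₀ • 1)ᴴ)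

/-- The matrix `D_θ` of the pencil `(C, D_θ)`. -/
def pencilD (m : ℕ) (θ : ℝ) : Matrix (Fin m ⊕ Fin m) (Fin m ⊕ Fin m) ℂ :=
  Matrix.fromBlocks ((-(Complex.I * Complex.exp ((θ : ℂ) * Complex.I))) • 1) 0 0
    ((Complex.I * Complex.exp (-((θ : ℂ) * Complex.I))) • 1)

/-- The spectrum of a matrix pencil `(C, D)`: all `λ` with `det (C - λ D) = 0`. -/
def pencilSpec {k : Type} [Fintype k] [DecidableEq k] (C D : Matrix k k ℂ) : Set ℂ :=
  {lam : ℂ | (C - lam • D).det = 0}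

/-- The function `a_ε(θ) = min {(Arg (-iλ))² : λ ∈ Λ(C, D_θ), Re λ ≤ 0}`. -/
def aFun {m : ℕ} (A : Matrix (Fin m) (Fin m) ℂ) (ε : ℝ) (z₀ : ℂ) (θ : ℝ) : ℝ :=
  sInf {x : ℝ | ∃ lam ∈ pencilSpec (pencilC A ε z₀) (pencilD m θ),
    lam.re ≤ 0 ∧ x = (Complex.arg (-Complex.I * lam)) ^ 2}

/-!
At `λ = i r` the pencil `C - λ D_θ` only moves the base point `z₀` of `C` to `z = z₀ + r e^{iθ}`, so
its determinant is that of the block matrix `[F, -ε; ε, -Fᴴ]` with `F = A - z`. The lower blocks of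
that matrix commute, so its determinant can be computed as if the blocks were scalars: it is
`± det (F Fᴴ - ε²)`.
-/

section BlockDeterminant

variable {n R : Type*} [Fintype n] [DecidableEq n] [CommRing R]

lemma det_fromBlocks_mul_det_of_commute (A B : Matrix n n R) {C D : Matrix n n R}
    (h : Commute C D) :
    (fromBlocks A B C D).det * D.det = (A * D - B * C).det * D.det := by
  have factorization :
      fromBlocks A B C D * fromBlocks D 0 (-C) 1 = fromBlocks (A * D - B * C) B 0 D := by
    simp [fromBlocks_multiply, h.eq, sub_eq_add_neg]
  simpa using congrArg det factorization

/- When `det D` is a zero divisor it cannot be cancelled directly. Over `R[X]` the lower right block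
`X + D` has a monic, hence regular, determinant; the identity is then specialised at `X = 0`. -/
lemma det_fromBlocks_of_commute (A B : Matrix n n R) {C D : Matrix n n R} (h : Commute C D) :
    (fromBlocks A B C D).det = (A * D - B * C).det := by
  let ι : Matrix n n R →+* Matrix n n R[X] := Polynomial.C.mapMatrix
  let evalZero : R[X] →+* R := Polynomial.evalRingHom 0
  have map_ι (M : Matrix n n R) : (ι M).map evalZero = M := by
    ext; simp [ι, evalZero]
  have map_charmatrix : (charmatrix (-D)).map evalZero = D := by
    ext; simp [charmatrix, evalZero, diagonal_apply, apply_ite]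
  have commute_charmatrix : Commute (ι C) (charmatrix (-D)) :=
    (scalar_commute X (Commute.all X) (ι C)).symm.sub_right (h.neg_right.map ι)
  have generic : (fromBlocks (ι A) (ι B) (ι C) (charmatrix (-D))).det =
      (ι A * charmatrix (-D) - ι B * ι C).det :=
    (charpoly_monic (-D)).isRegular.right
      (det_fromBlocks_mul_det_of_commute (ι A) (ι B) commute_charmatrix)
  simpa only [RingHom.map_det, RingHom.mapMatrix_apply, fromBlocks_map, map_ι, map_charmatrix,
    Matrix.map_sub _ (map_sub evalZero), Matrix.map_mul] using congrArg evalZero generic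

lemma det_fromBlocks_neg_smul_one_smul_one_neg (F G : Matrix n n R) (e : R) :
    (fromBlocks F ((-e) • 1) (e • 1) (-G)).det =
      (-1) ^ Fintype.card n * (F * G - e ^ 2 • 1).det := by
  have commute_lower : Commute (e • (1 : Matrix n n R)) (-G) :=
    (Commute.one_left (-G)).smul_left e
  calc (fromBlocks F ((-e) • 1) (e • 1) (-G)).det
      = (F * -G - (-e) • 1 * e • 1).det := det_fromBlocks_of_commute F _ commute_lower
    _ = (-(F * G - e ^ 2 • 1)).det := by
      congr 1
      simp only [Matrix.mul_neg, smul_mul_smul, Matrix.one_mul]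
      module
    _ = (-1) ^ Fintype.card n * (F * G - e ^ 2 • 1).det := det_neg _

end BlockDeterminant

section Pencil

variable {m : ℕ} (A : Matrix (Fin m) (Fin m) ℂ)

lemma isSingularValue_sub_smul_one_iff_det_pencilC_eq_zero {ε : ℝ} (hε : 0 ≤ ε) (z : ℂ) :
    IsSingularValue (A - z • 1) ε ↔ (pencilC A ε z).det = 0 := by
  rw [IsSingularValue, and_iff_right hε, pencilC, det_fromBlocks_neg_smul_one_smul_one_neg,
    mul_eq_zero_iff_left (pow_ne_zero _ (neg_ne_zero.mpr one_ne_zero))]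

lemma pencilC_sub_I_mul_smul_pencilD (ε : ℝ) (z₀ : ℂ) (θ r : ℝ) :
    pencilC A ε z₀ - (I * r) • pencilD m θ = pencilC A ε (z₀ + r * exp (θ * I)) := by
  have upper : I * r * -(I * exp (θ * I)) = r * exp (θ * I) := by
    linear_combination (-r * exp (θ * I)) * I_mul_I
  have lower : I * r * (I * exp (-(θ * I))) = -star (r * exp (θ * I)) := by
    have star_exp : star (exp (θ * I)) = exp (-(θ * I)) := by
      simp [← exp_conj]
    rw [star_mul', star_exp, star_def, conj_ofReal]
    linear_combination (r * exp (-(θ * I))) * I_mul_I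
  rw [pencilC, pencilC, pencilD, fromBlocks_smul, sub_eq_add_neg, fromBlocks_neg, fromBlocks_add,
    smul_smul, smul_smul, upper, lower]
  congr 1
  · module
  · simp
  · simp
  · simp only [conjTranspose_sub, conjTranspose_smul, conjTranspose_one, star_add]
    module

end Pencil

theorem stmt0 {m : ℕ} (A : Matrix (Fin m) (Fin m) ℂ) (ε : ℝ) (hε : 0 ≤ ε)
    (z₀ : ℂ) (θ r : ℝ) :
    IsSingularValue (A - (z₀ + (r : ℂ) * Complex.exp ((θ : ℂ) * Complex.I)) • 1) ε ↔
      Complex.I * (r : ℂ) ∈ pencilSpec (pencilC A ε z₀) (pencilD m θ) := by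
  rw [isSingularValue_sub_smul_one_iff_det_pencilC_eq_zero A hε, pencilSpec, Set.mem_ofPred_eq,
    pencilC_sub_I_mul_smul_pencilD]
end
end

section
/- Let A ∈ ℂ^{m×m}, ε ≥ 0, and z₀ ∈ ℂ be such that ε is not a singular value of A − z₀I. If ε > σ_min(A − z₀I), then 𝒜(ε) = (−π, π], and hence the Lebesgue measure of 𝒜(ε) equals 2π. -/
open Complex Matrix MeasureTheory Set Polynomial Topology

noncomputable section

open scoped Classical

/-!
For `r > 0` put `z = z₀ + r e^{iθ}`. The blocks of `C - i r D_θ` are `A - z`, `-ε`, `ε` and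
`-(A - z)ᴴ`, so its determinant is `± det ((A - z)(A - z)ᴴ - ε²)`, and `i r` lies in `Λ(C, D_θ)` iff
`ε` is a singular value of `A - z`. On the other hand `σ_min` is `1`-Lipschitz, because
`σ_min(M) ‖x‖ ≤ ‖Mᴴ x‖` with the best constant, and `σ_min(A - z) ≥ |z| - ‖A‖`. Hence, along every
ray from `z₀`, `σ_min(A - z)` moves continuously from a value below `ε` to values above `ε`, and it
equals `ε` somewhere. There `λ = i r` satisfies `Re λ = 0` and `Arg (-iλ) = Arg r = 0`.
-/

theorem det_fromBlocks_smul_one {n K : Type*} [Fintype n] [DecidableEq n] [Field K]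
    (A D : Matrix n n K) (b c : K) :
    (fromBlocks A (b • 1) (c • 1) D).det = (A * D - (b * c) • 1).det := by
  rcases eq_or_ne c 0 with rfl | hc
  · simp [det_fromBlocks_zero₂₁]
  -- Adding a multiple of the second block row to the first turns the top left block into `1`.
  have hrow : fromBlocks 1 (c⁻¹ • (1 - A)) 0 1 * fromBlocks A (b • 1) (c • 1) D =
      fromBlocks 1 (b • 1 + c⁻¹ • ((1 - A) * D)) (c • 1) D := by
    simp [fromBlocks_multiply, hc]
  calc (fromBlocks A (b • 1) (c • 1) D).det
      = (fromBlocks 1 (b • 1 + c⁻¹ • ((1 - A) * D)) (c • 1) D).det := by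
        simp [← hrow, det_mul]
    _ = (A * D - (b * c) • 1).det := by
        rw [det_fromBlocks_one₁₁]
        congr 1
        simp only [smul_mul, Matrix.one_mul, smul_add, smul_smul, mul_inv_cancel₀ hc, one_smul,
          Matrix.sub_mul, mul_comm c b]
        abel

section Loewner

open scoped MatrixOrder ComplexOrder

variable {n 𝕜 : Type*} [Fintype n] [DecidableEq n] [RCLike 𝕜] {M : Matrix n n 𝕜} {c : ℝ}

theorem star_dotProduct_mul_conjTranspose_mulVec (M : Matrix n n 𝕜) (x : EuclideanSpace 𝕜 n) :
    star x.ofLp ⬝ᵥ (M * Mᴴ) *ᵥ x.ofLp = (‖toEuclideanCLM (𝕜 := 𝕜) Mᴴ x‖ ^ 2 : 𝕜) := by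
  rw [← inner_self_eq_norm_sq_to_K, EuclideanSpace.inner_eq_star_dotProduct,
    ofLp_toEuclideanCLM, star_mulVec, conjTranspose_conjTranspose, ← mulVec_mulVec,
    dotProduct_mulVec, dotProduct_comm]

theorem star_dotProduct_algebraMap_mulVec (c : ℝ) (x : EuclideanSpace 𝕜 n) :
    star x.ofLp ⬝ᵥ algebraMap ℝ (Matrix n n 𝕜) c *ᵥ x.ofLp = (c * ‖x‖ ^ 2 : 𝕜) := by
  rw [← inner_self_eq_norm_sq_to_K, EuclideanSpace.inner_eq_star_dotProduct,
    Algebra.algebraMap_eq_smul_one, smul_mulVec, one_mulVec, dotProduct_smul, dotProduct_comm,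
    RCLike.real_smul_eq_coe_mul]

theorem algebraMap_sq_le_mul_conjTranspose_iff (hc : 0 ≤ c) :
    algebraMap ℝ _ (c ^ 2) ≤ M * Mᴴ ↔
      ∀ x : EuclideanSpace 𝕜 n, c * ‖x‖ ≤ ‖toEuclideanCLM (𝕜 := 𝕜) Mᴴ x‖ := by
  have hHerm : (M * Mᴴ - algebraMap ℝ _ (c ^ 2)).IsHermitian :=
    (isHermitian_mul_conjTranspose_self M).sub (IsSelfAdjoint.algebraMap _ (.all (c ^ 2)))
  have hquad (x : EuclideanSpace 𝕜 n) :
      star x.ofLp ⬝ᵥ (M * Mᴴ - algebraMap ℝ _ (c ^ 2)) *ᵥ x.ofLp =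
        ((‖toEuclideanCLM (𝕜 := 𝕜) Mᴴ x‖ ^ 2 - (c * ‖x‖) ^ 2 : ℝ) : 𝕜) := by
    rw [Matrix.sub_mulVec, dotProduct_sub, star_dotProduct_mul_conjTranspose_mulVec,
      star_dotProduct_algebraMap_mulVec]
    push_cast
    ring
  rw [le_iff, posSemidef_iff_dotProduct_mulVec, and_iff_right hHerm,
    ← (WithLp.equiv 2 (n → 𝕜)).forall_congr_right]
  refine forall_congr' fun x ↦ ?_
  rw [WithLp.equiv_apply, hquad, RCLike.ofReal_nonneg, sub_nonneg,
    sq_le_sq₀ (by positivity) (norm_nonneg _)]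

end Loewner

section SingularValue

variable {k : ℕ} {M : Matrix (Fin k) (Fin k) ℂ} {s : ℝ}

theorem isSingularValue_iff_sq_mem_spectrum :
    IsSingularValue M s ↔ 0 ≤ s ∧ s ^ 2 ∈ spectrum ℝ (M * Mᴴ) := by
  rw [IsSingularValue, ← spectrum.algebraMap_mem_iff ℂ, spectrum.mem_iff, isUnit_iff_isUnit_det,
    isUnit_iff_ne_zero, not_not, ← neg_sub, det_neg, mul_eq_zero, Algebra.algebraMap_eq_smul_one]
  simp

open scoped MatrixOrder ComplexOrder in
theorem exists_isSingularValue_sq_eq {t : ℝ} (ht : t ∈ spectrum ℝ (M * Mᴴ)) :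
    ∃ s, IsSingularValue M s ∧ s ^ 2 = t := by
  have hsq : √t ^ 2 = t := Real.sq_sqrt <|
    spectrum_nonneg_of_nonneg (posSemidef_self_mul_conjTranspose M).nonneg ht
  exact ⟨√t, isSingularValue_iff_sq_mem_spectrum.2 ⟨Real.sqrt_nonneg t, by rwa [hsq]⟩, hsq⟩

theorem exists_isSingularValue [NeZero k] (M : Matrix (Fin k) (Fin k) ℂ) :
    ∃ s, IsSingularValue M s :=
  (exists_isSingularValue_sq_eq
    ((isHermitian_mul_conjTranspose_self M).eigenvalues_mem_spectrum_real 0)).imp fun _ ↦ And.left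

theorem bddBelow_setOf_isSingularValue (M : Matrix (Fin k) (Fin k) ℂ) :
    BddBelow {s | IsSingularValue M s} :=
  ⟨0, fun _ hs ↦ hs.1⟩

theorem sigmaMin_nonneg (M : Matrix (Fin k) (Fin k) ℂ) : 0 ≤ sigmaMin M :=
  Real.sInf_nonneg fun _ hs ↦ hs.1

theorem isSingularValue_sigmaMin [NeZero k] (M : Matrix (Fin k) (Fin k) ℂ) :
    IsSingularValue M (sigmaMin M) := by
  have hclosed : IsClosed {s | IsSingularValue M s} :=
    isClosed_Ici.inter (isClosed_singleton.preimage (by fun_prop :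
      Continuous fun s : ℝ ↦ (M * Mᴴ - ((s : ℂ) ^ 2) • 1).det))
  exact hclosed.csInf_mem (exists_isSingularValue M) (bddBelow_setOf_isSingularValue M)

theorem le_sigmaMin_iff_le_spectrum [NeZero k] {c : ℝ} (hc : 0 ≤ c) :
    c ≤ sigmaMin M ↔ ∀ t ∈ spectrum ℝ (M * Mᴴ), c ^ 2 ≤ t := by
  constructor
  · intro h t ht
    obtain ⟨s, hs, rfl⟩ := exists_isSingularValue_sq_eq ht
    exact pow_le_pow_left₀ hc (h.trans (csInf_le (bddBelow_setOf_isSingularValue M) hs)) 2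
  · intro h
    exact le_csInf (exists_isSingularValue M) fun s hs ↦
      (sq_le_sq₀ hc hs.1).1 (h _ (isSingularValue_iff_sq_mem_spectrum.1 hs).2)

open scoped MatrixOrder ComplexOrder Matrix.Norms.L2Operator

theorem le_sigmaMin_iff [NeZero k] {c : ℝ} (hc : 0 ≤ c) :
    c ≤ sigmaMin M ↔
      ∀ x : EuclideanSpace ℂ (Fin k), c * ‖x‖ ≤ ‖toEuclideanCLM (𝕜 := ℂ) Mᴴ x‖ := by
  rw [le_sigmaMin_iff_le_spectrum hc, ← algebraMap_sq_le_mul_conjTranspose_iff hc,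
    algebraMap_le_iff_le_spectrum (isHermitian_mul_conjTranspose_self M)]

theorem sigmaMin_le_sigmaMin_add_norm_sub [NeZero k] (M N : Matrix (Fin k) (Fin k) ℂ) :
    sigmaMin M ≤ sigmaMin N + ‖M - N‖ := by
  rcases le_total (sigmaMin M) ‖M - N‖ with h | h
  · linarith [sigmaMin_nonneg N]
  rw [← sub_le_iff_le_add, le_sigmaMin_iff (sub_nonneg.2 h)]
  intro x
  have hM : sigmaMin M * ‖x‖ ≤ ‖toEuclideanCLM (𝕜 := ℂ) Mᴴ x‖ :=
    (le_sigmaMin_iff (sigmaMin_nonneg M)).1 le_rfl x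
  have hMN : ‖toEuclideanCLM (𝕜 := ℂ) Mᴴ x - toEuclideanCLM (𝕜 := ℂ) Nᴴ x‖ ≤ ‖M - N‖ * ‖x‖ := by
    have := (toEuclideanCLM (𝕜 := ℂ) (M - N)ᴴ).le_opNorm x
    rw [l2_opNorm_toEuclideanCLM, l2_opNorm_conjTranspose] at this
    simpa using this
  linarith [norm_sub_norm_le (toEuclideanCLM (𝕜 := ℂ) Mᴴ x) (toEuclideanCLM (𝕜 := ℂ) Nᴴ x)]

theorem continuous_sigmaMin [NeZero k] :
    Continuous (sigmaMin : Matrix (Fin k) (Fin k) ℂ → ℝ) :=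
  (LipschitzWith.of_le_add fun M N ↦ by
    simpa only [dist_eq_norm] using sigmaMin_le_sigmaMin_add_norm_sub M N).continuous

theorem norm_sub_norm_le_sigmaMin_sub_smul_one [NeZero k] (M : Matrix (Fin k) (Fin k) ℂ) (z : ℂ) :
    ‖z‖ - ‖M‖ ≤ sigmaMin (M - z • 1) := by
  have hz : ‖z‖ ≤ sigmaMin (-(z • 1 : Matrix (Fin k) (Fin k) ℂ)) := by
    rw [le_sigmaMin_iff (norm_nonneg z)]
    intro x
    simp [norm_smul]
  have hM := sigmaMin_le_sigmaMin_add_norm_sub (-(z • 1)) (M - z • 1)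
  rw [show -(z • 1) - (M - z • 1) = -M by abel, norm_neg] at hM
  linarith

theorem exists_mem_ray_isSingularValue [NeZero k] {ε : ℝ} {z₀ : ℂ}
    (h : sigmaMin (M - z₀ • 1) < ε) (θ : ℝ) : ∃ z ∈ ray z₀ θ, IsSingularValue (M - z • 1) ε := by
  let z : ℝ → ℂ := fun r ↦ z₀ + r * exp (θ * I)
  let f : ℝ → ℝ := fun r ↦ sigmaMin (M - z r • 1)
  have hf : Continuous f := continuous_sigmaMin.comp (by fun_prop)
  have hf_zero : f 0 < ε := by simpa [f, z] using h
  set R := ε + ‖z₀‖ + ‖M‖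
  have hε : 0 < ε := (sigmaMin_nonneg _).trans_lt h
  have hf_R : ε ≤ f R := by
    have hzR : R ≤ ‖z R‖ + ‖z₀‖ := calc
      R ≤ ‖z R - z₀‖ := by simp [z, le_abs_self]
      _ ≤ ‖z R‖ + ‖z₀‖ := norm_sub_le _ _
    linarith [norm_sub_norm_le_sigmaMin_sub_smul_one M (z R)]
  obtain ⟨r, hr, hfr⟩ :=
    intermediate_value_Ioc (by positivity) hf.continuousOn ⟨hf_zero, hf_R⟩
  exact ⟨z r, ⟨r, hr.1, rfl⟩, hfr ▸ isSingularValue_sigmaMin _⟩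

end SingularValue

section Pencil

variable {m : ℕ} (A : Matrix (Fin m) (Fin m) ℂ) (ε : ℝ) (z₀ : ℂ) (θ r : ℝ)

theorem pencilC_sub_smul_pencilD :
    pencilC A ε z₀ - (I * r) • pencilD m θ =
      fromBlocks (A - (z₀ + r * exp (θ * I)) • 1) (-(ε : ℂ) • 1) ((ε : ℂ) • 1)
        (-(A - (z₀ + r * exp (θ * I)) • 1)ᴴ) := by
  have hconj : star (z₀ + r * exp (θ * I)) = star z₀ + r * exp (-(θ * I)) := by
    simp [← exp_conj]
  have hI (w : ℂ) : I * r * (I * w) = -(r * w) := by linear_combination (r : ℂ) * w * I_mul_I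
  rw [pencilC, pencilD, fromBlocks_smul, sub_eq_add_neg, fromBlocks_neg, fromBlocks_add]
  congr 1
  · rw [smul_smul, mul_neg, hI, neg_neg]
    module
  · simp
  · simp
  · simp only [conjTranspose_sub, conjTranspose_smul, conjTranspose_one, hconj, smul_smul, hI]
    module

variable {A ε z₀ θ r}

theorem I_mul_mem_pencilSpec_iff_isSingularValue (hε : 0 ≤ ε) :
    I * r ∈ pencilSpec (pencilC A ε z₀) (pencilD m θ) ↔
      IsSingularValue (A - (z₀ + r * exp (θ * I)) • 1) ε := by
  rw [pencilSpec, mem_ofPred_eq, pencilC_sub_smul_pencilD, det_fromBlocks_smul_one,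
    IsSingularValue, and_iff_right hε]
  generalize A - (z₀ + r * exp (θ * I)) • 1 = N
  rw [show N * -Nᴴ - (-(ε : ℂ) * ε) • 1 = -(N * Nᴴ - (ε : ℂ) ^ 2 • 1) by simp [sq]; abel,
    det_neg, mul_eq_zero, or_iff_right (pow_ne_zero _ (neg_ne_zero.2 one_ne_zero))]

theorem aFun_eq_zero_of_I_mul_mem (hr : 0 < r)
    (h : I * r ∈ pencilSpec (pencilC A ε z₀) (pencilD m θ)) : aFun A ε z₀ θ = 0 := by
  refine IsLeast.csInf_eq ⟨⟨I * r, h, by simp, ?_⟩, ?_⟩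
  · have : -I * (I * r) = r := by linear_combination (-(r : ℂ)) * I_mul_I
    rw [this, arg_ofReal_of_nonneg hr.le, zero_pow two_ne_zero]
  · rintro _ ⟨lam, -, -, rfl⟩
    positivity

theorem aFun_eq_zero_of_sigmaMin_lt (h : sigmaMin (A - z₀ • 1) < ε) (θ : ℝ) :
    aFun A ε z₀ θ = 0 := by
  rcases eq_or_ne m 0 with rfl | hm
  · simp [aFun, pencilSpec] -- the spectrum is empty and `sInf ∅ = 0`
  have : NeZero m := ⟨hm⟩
  obtain ⟨_, ⟨r, hr, rfl⟩, hsing⟩ := exists_mem_ray_isSingularValue h θ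
  exact aFun_eq_zero_of_I_mul_mem hr ((I_mul_mem_pencilSpec_iff_isSingularValue hsing.1).2 hsing)

end Pencil

theorem stmt8_general {m : ℕ} (A : Matrix (Fin m) (Fin m) ℂ) (ε : ℝ) (z₀ : ℂ)
    (hgt : sigmaMin (A - z₀ • 1) < ε) :
    {θ : ℝ | θ ∈ Set.Ioc (-Real.pi) Real.pi ∧ aFun A ε z₀ θ = 0} =
        Set.Ioc (-Real.pi) Real.pi ∧
    volume {θ : ℝ | θ ∈ Set.Ioc (-Real.pi) Real.pi ∧ aFun A ε z₀ θ = 0} =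
      ENNReal.ofReal (2 * Real.pi) := by
  have h : {θ : ℝ | θ ∈ Set.Ioc (-Real.pi) Real.pi ∧ aFun A ε z₀ θ = 0} =
      Set.Ioc (-Real.pi) Real.pi := by
    simp only [aFun_eq_zero_of_sigmaMin_lt hgt, and_true, ofPred_mem_eq]
  refine ⟨h, ?_⟩
  rw [h, Real.volume_Ioc, sub_neg_eq_add, two_mul]

theorem stmt8 {m : ℕ} (A : Matrix (Fin m) (Fin m) ℂ) (ε : ℝ) (hε : 0 ≤ ε) (z₀ : ℂ)
    (hsv : ¬ IsSingularValue (A - z₀ • 1) ε)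
    (hgt : sigmaMin (A - z₀ • 1) < ε) :
    {θ : ℝ | θ ∈ Set.Ioc (-Real.pi) Real.pi ∧ aFun A ε z₀ θ = 0} =
        Set.Ioc (-Real.pi) Real.pi ∧
    volume {θ : ℝ | θ ∈ Set.Ioc (-Real.pi) Real.pi ∧ aFun A ε z₀ θ = 0} =
      ENNReal.ofReal (2 * Real.pi) :=
  stmt8_general A ε z₀ hgt
end
end

section
/- Let 𝒜, ℬ ⊂ ℝ be sets such that 𝒜 has exactly m connected components and ℬ has exactly n connected components, where m and n are positive integers. Then 𝒜 ∩ ℬ has at most m + n − 1 connected components. -/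
open Complex Matrix MeasureTheory Set Polynomial Topology

noncomputable section

open scoped Classical

/-- The set of connected components of a set `S ⊆ ℝ` (with the subspace topology). -/
def compSet (S : Set ℝ) : Set (Set ℝ) :=
  {T : Set ℝ | ∃ x ∈ S, T = connectedComponentIn S x}

/-!
Along a linear order, a component of `s ∩ t` is the intersection of a component of `s` with a
component of `t`. When one sweeps through `s ∩ t` from left to right, each new component of `s ∩ t`
therefore comes with a new component of `s` or a new component of `t`, neither of which recurs
after it has been left; the first point accounts for one of each, hence the saving of `1`.
-/

section Counting

variable {α β γ δ : Type*} {f : α → β} {g : α → γ}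

lemma finite_image_map₂ (φ : β → γ → δ) {s : Set α} (hf : (f '' s).Finite)
    (hg : (g '' s).Finite) : ((fun x => φ (f x) (g x)) '' s).Finite :=
  (hf.image2 φ hg).subset <| image_subset_iff.2 fun _ hx =>
    mem_image2_of_mem (mem_image_of_mem f hx) (mem_image_of_mem g hx)

lemma card_image_le_ncard_image [DecidableEq β] {P : Finset α} {s : Set α} (hPs : ↑P ⊆ s)
    (hf : (f '' s).Finite) : (P.image f).card ≤ (f '' s).ncard := by
  rw [← ncard_coe_finset, Finset.coe_image]
  exact ncard_le_ncard (image_mono hPs) hf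

variable [LinearOrder α]

lemma notMem_image_of_ordConnected_fiber [DecidableEq β] {P : Finset α} {x y : α}
    (hf : (f ⁻¹' {f x}).OrdConnected) (hP : ∀ p ∈ P, p ≤ y) (hyx : y ≤ x) (hne : f y ≠ f x) :
    f x ∉ P.image f := by
  intro hmem
  obtain ⟨p, hp, hpx⟩ := Finset.mem_image.1 hmem
  exact hne (hf.out hpx rfl ⟨hP p hp, hyx⟩)

lemma card_image_map₂_add_one_le [DecidableEq β] [DecidableEq γ] [DecidableEq δ] (φ : β → γ → δ)
    {P : Finset α} (hP : P.Nonempty) (hf : ∀ x ∈ P, (f ⁻¹' {f x}).OrdConnected)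
    (hg : ∀ x ∈ P, (g ⁻¹' {g x}).OrdConnected) :
    (P.image fun x => φ (f x) (g x)).card + 1 ≤ (P.image f).card + (P.image g).card := by
  induction P using Finset.induction_on_max with
  | empty => exact absurd hP Finset.not_nonempty_empty
  | insert x P hlt ih =>
    rcases P.eq_empty_or_nonempty with rfl | hne
    · simp
    have ih := ih hne (fun p hp => hf p (Finset.mem_insert_of_mem hp))
      (fun p hp => hg p (Finset.mem_insert_of_mem hp))
    obtain ⟨y, hyP, hy⟩ := P.exists_max_image id hne
    have hyx : y ≤ x := (hlt y hyP).le
    have hxP : x ∈ insert x P := Finset.mem_insert_self x P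
    have hfle := Finset.card_le_card (Finset.subset_insert (f x) (P.image f))
    have hgle := Finset.card_le_card (Finset.subset_insert (g x) (P.image g))
    have hφle := Finset.card_insert_le (φ (f x) (g x)) (P.image fun x => φ (f x) (g x))
    simp only [Finset.image_insert]
    by_cases hfy : f y = f x
    · by_cases hgy : g y = g x
      · have hφ : φ (f x) (g x) ∈ P.image fun x => φ (f x) (g x) :=
          Finset.mem_image.2 ⟨y, hyP, by rw [hfy, hgy]⟩
        rw [Finset.insert_eq_of_mem hφ]
        lia
      · have hgnew := Finset.card_insert_of_notMem
          (notMem_image_of_ordConnected_fiber (hg x hxP) hy hyx hgy)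
        lia
    · have hfnew := Finset.card_insert_of_notMem
        (notMem_image_of_ordConnected_fiber (hf x hxP) hy hyx hfy)
      lia

lemma ncard_image_map₂_add_one_le (φ : β → γ → δ) {s : Set α} (hs : s.Nonempty)
    (hf : ∀ x ∈ s, (f ⁻¹' {f x}).OrdConnected) (hg : ∀ x ∈ s, (g ⁻¹' {g x}).OrdConnected)
    (hfs : (f '' s).Finite) (hgs : (g '' s).Finite) :
    ((fun x => φ (f x) (g x)) '' s).ncard + 1 ≤ (f '' s).ncard + (g '' s).ncard := by
  have hφs : ((fun x => φ (f x) (g x)) '' s).Finite := finite_image_map₂ φ hfs hgs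
  obtain ⟨P, hPs, hP⟩ : ∃ P : Finset α, ↑P ⊆ s ∧
      P.image (fun x => φ (f x) (g x)) = hφs.toFinset :=
    Finset.subset_set_image_iff.1 hφs.coe_toFinset.subset
  have hPne : P.Nonempty :=
    Finset.image_nonempty.1 (hP ▸ hφs.toFinset_nonempty.2 (hs.image _))
  calc ((fun x => φ (f x) (g x)) '' s).ncard + 1
      = (P.image fun x => φ (f x) (g x)).card + 1 := by rw [hP, ncard_eq_toFinset_card _ hφs]
    _ ≤ (P.image f).card + (P.image g).card :=
      card_image_map₂_add_one_le φ hPne (fun x hx => hf x (hPs hx)) (fun x hx => hg x (hPs hx))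
    _ ≤ (f '' s).ncard + (g '' s).ncard :=
      add_le_add (card_image_le_ncard_image hPs hfs) (card_image_le_ncard_image hPs hgs)

end Counting

/-- The set of connected components of a subset `s` of a topological space, each component being
regarded as a subset of the ambient space. -/
def componentsIn {α : Type*} [TopologicalSpace α] (s : Set α) : Set (Set α) :=
  connectedComponentIn s '' s

lemma componentsIn_nonempty {α : Type*} [TopologicalSpace α] {s : Set α} :
    (componentsIn s).Nonempty ↔ s.Nonempty :=
  image_nonempty

lemma preimage_connectedComponentIn_singleton {α : Type*} [TopologicalSpace α] {s : Set α} {x : α}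
    (hx : x ∈ s) :
    connectedComponentIn s ⁻¹' {connectedComponentIn s x} = connectedComponentIn s x := by
  ext y
  refine ⟨fun hy => ?_, fun hy => (connectedComponentIn_eq hy).symm⟩
  have hyx : connectedComponentIn s y = connectedComponentIn s x := hy
  have hys : y ∈ s := by
    rw [← connectedComponentIn_nonempty_iff, hyx]
    exact connectedComponentIn_nonempty_iff.2 hx
  exact hyx ▸ mem_connectedComponentIn hys

section LinearOrder

variable {α : Type*} [LinearOrder α] [TopologicalSpace α] [OrderClosedTopology α] {s t : Set α}

lemma isPreconnected_uIcc_of_mem (hs : IsPreconnected s) {x y : α} (hx : x ∈ s) (hy : y ∈ s) :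
    IsPreconnected (uIcc x y) := by
  wlog hxy : x ≤ y generalizing x y
  · rw [uIcc_comm]
    exact this hy hx (le_of_not_ge hxy)
  -- An interval of an incomplete order may be disconnected, but this one is a retract of `s`.
  have himage : (fun z => max x (min y z)) '' s = Icc x y := by
    apply subset_antisymm
    · rintro _ ⟨z, -, rfl⟩
      exact ⟨le_max_left _ _, max_le hxy (min_le_left _ _)⟩
    · intro z hz
      exact ⟨z, hs.Icc_subset hx hy hz, by simp only [min_eq_right hz.2, max_eq_right hz.1]⟩
  rw [uIcc_of_le hxy, ← himage]
  exact hs.image _ (by fun_prop)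

lemma isPreconnected_inter_of_ordConnected (hs : IsPreconnected s) (ht : t.OrdConnected) :
    IsPreconnected (s ∩ t) :=
  isPreconnected_of_forall_pair fun x hx y hy =>
    ⟨uIcc x y, subset_inter (hs.ordConnected.uIcc_subset hx.1 hy.1) (ht.uIcc_subset hx.2 hy.2),
      left_mem_uIcc, right_mem_uIcc, isPreconnected_uIcc_of_mem hs hx.1 hy.1⟩

lemma connectedComponentIn_inter (s t : Set α) (x : α) :
    connectedComponentIn (s ∩ t) x = connectedComponentIn s x ∩ connectedComponentIn t x := by
  refine subset_antisymm (subset_inter (connectedComponentIn_mono x inter_subset_left)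
    (connectedComponentIn_mono x inter_subset_right)) fun y hy => ?_
  have hxs : x ∈ s := connectedComponentIn_nonempty_iff.1 ⟨y, hy.1⟩
  have hxt : x ∈ t := connectedComponentIn_nonempty_iff.1 ⟨y, hy.2⟩
  have hpre : IsPreconnected (connectedComponentIn s x ∩ connectedComponentIn t x) :=
    isPreconnected_inter_of_ordConnected isPreconnected_connectedComponentIn
      isPreconnected_connectedComponentIn.ordConnected
  exact hpre.subset_connectedComponentIn
    ⟨mem_connectedComponentIn hxs, mem_connectedComponentIn hxt⟩
    (inter_subset_inter (connectedComponentIn_subset s x) (connectedComponentIn_subset t x)) hy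

lemma componentsIn_inter (s t : Set α) :
    componentsIn (s ∩ t) =
      (fun x => connectedComponentIn s x ∩ connectedComponentIn t x) '' (s ∩ t) :=
  image_congr fun x _ => connectedComponentIn_inter s t x

lemma ordConnected_preimage_connectedComponentIn_singleton {x : α} (hx : x ∈ s) :
    (connectedComponentIn s ⁻¹' {connectedComponentIn s x}).OrdConnected := by
  rw [preimage_connectedComponentIn_singleton hx]
  exact isPreconnected_connectedComponentIn.ordConnected

lemma finite_componentsIn_inter (hs : (componentsIn s).Finite) (ht : (componentsIn t).Finite) :
    (componentsIn (s ∩ t)).Finite := by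
  rw [componentsIn_inter]
  exact finite_image_map₂ (· ∩ ·) (hs.subset (image_mono inter_subset_left))
    (ht.subset (image_mono inter_subset_right))

lemma ncard_componentsIn_inter_add_one_le (hst : (s ∩ t).Nonempty) (hs : (componentsIn s).Finite)
    (ht : (componentsIn t).Finite) :
    (componentsIn (s ∩ t)).ncard + 1 ≤ (componentsIn s).ncard + (componentsIn t).ncard := by
  have hs_sub : connectedComponentIn s '' (s ∩ t) ⊆ componentsIn s := image_mono inter_subset_left
  have ht_sub : connectedComponentIn t '' (s ∩ t) ⊆ componentsIn t := image_mono inter_subset_right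
  rw [componentsIn_inter]
  exact (ncard_image_map₂_add_one_le (· ∩ ·) hst
    (fun _ hx => ordConnected_preimage_connectedComponentIn_singleton hx.1)
    (fun _ hx => ordConnected_preimage_connectedComponentIn_singleton hx.2)
    (hs.subset hs_sub) (ht.subset ht_sub)).trans
    (add_le_add (ncard_le_ncard hs_sub hs) (ncard_le_ncard ht_sub ht))

theorem stmt10_general (hne : s.Nonempty) (hs : (componentsIn s).Finite)
    (ht : (componentsIn t).Finite) :
    (componentsIn (s ∩ t)).Finite ∧
      (componentsIn (s ∩ t)).ncard + 1 ≤ (componentsIn s).ncard + (componentsIn t).ncard := by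
  refine ⟨finite_componentsIn_inter hs ht, ?_⟩
  rcases (s ∩ t).eq_empty_or_nonempty with hst | hst
  · have hpos : 0 < (componentsIn s).ncard := (ncard_pos hs).2 (componentsIn_nonempty.2 hne)
    rw [hst, componentsIn, image_empty, ncard_empty, zero_add]
    exact Nat.le_add_right_of_le hpos
  · exact ncard_componentsIn_inter_add_one_le hst hs ht

end LinearOrder

lemma compSet_eq_componentsIn (S : Set ℝ) : compSet S = componentsIn S := by
  ext T
  simp only [compSet, componentsIn, mem_ofPred_eq, mem_image, eq_comm]

theorem stmt10 (𝒜 ℬ : Set ℝ) (m n : ℕ) (hm : 0 < m) (hn : 0 < n)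
    (hAfin : (compSet 𝒜).Finite) (hAcard : (compSet 𝒜).ncard = m)
    (hBfin : (compSet ℬ).Finite) (hBcard : (compSet ℬ).ncard = n) :
    (compSet (𝒜 ∩ ℬ)).Finite ∧ (compSet (𝒜 ∩ ℬ)).ncard ≤ m + n - 1 := by
  simp only [compSet_eq_componentsIn] at hAfin hAcard hBfin hBcard ⊢
  have hne := componentsIn_nonempty.1 (nonempty_of_ncard_ne_zero (hAcard.trans_ne hm.ne'))
  exact (stmt10_general hne hAfin hBfin).imp_right fun h => by lia
end
end
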